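/- Let α, β ≥ -1/2. There exists a constant C depending only on α and β such that for all θ, φ ∈ (0,π) with θ ≠ φ one has ∬_{[-1,1]²} dΠ_α(u) dΠ_β(v) / q(θ,φ,u,v)^{α+β+3/2} ≤ C / μ_{α,β}^+(B(θ, |θ-φ|)). -/

import Mathlib

open MeasureTheory Real Set

noncomputable section

/-- The Jacobi measure `μ_{α,β}^+` on `(0,π)`: density
`(sin(θ/2))^(2α+1) (cos(θ/2))^(2β+1)` w.r.t. Lebesgue measure on `(0,π)`. -/
def jacobiMeasure (α β : ℝ) : Measure ℝ :=
  (volume.restrict (Ioo 0 π)).withDensity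
    (fun θ => ENNReal.ofReal (Real.sin (θ / 2) ^ (2 * α + 1) * Real.cos (θ / 2) ^ (2 * β + 1)))

/-- The ball `B(θ,r) = (θ-r, θ+r) ∩ (0,π)`. -/
def jacobiBall (θ r : ℝ) : Set ℝ := Ioo (θ - r) (θ + r) ∩ Ioo 0 π

/-- The measure `Π_α` on `[-1,1]`. -/
def PiMeasure (α : ℝ) : Measure ℝ :=
  if α = -(1 / 2) then (2 : ENNReal)⁻¹ • (Measure.dirac (-1) + Measure.dirac 1)
  else
    (volume.restrict (Icc (-1) 1)).withDensity
      (fun u => ENNReal.ofReal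
        (Real.Gamma (α + 1) / (Real.sqrt π * Real.Gamma (α + 1 / 2)) * (1 - u ^ 2) ^ (α - 1 / 2)))

/-- `q(θ,φ,u,v) = 1 - u sin(θ/2) sin(φ/2) - v cos(θ/2) cos(φ/2)`. -/
def qfun (θ φ u v : ℝ) : ℝ :=
  1 - u * Real.sin (θ / 2) * Real.sin (φ / 2) - v * Real.cos (θ / 2) * Real.cos (φ / 2)

/-- `Ψ^{α,β}(t,s) = sinh(t/2) / (cosh(t/2) - 1 + s)^(α+β+2)`. -/
def Psi (α β t s : ℝ) : ℝ :=
  Real.sinh (t / 2) / (Real.cosh (t / 2) - 1 + s) ^ (α + β + 2)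

/-- The Jacobi-Poisson kernel `H_t^{α,β}(θ,φ)`. -/
def Hker (α β t θ φ : ℝ) : ℝ :=
  ((2 : ℝ) ^ (-(α + β + 2)) / (jacobiMeasure α β (Ioo 0 π)).toReal) * Real.sinh (t / 2) *
    ∫ u, ∫ v, 1 / (Real.cosh (t / 2) - 1 + qfun θ φ u v) ^ (α + β + 2)
      ∂(PiMeasure β) ∂(PiMeasure α)

/-- The symmetrized kernel `H̃_t^{α,β}(θ,φ) = (1/4) sin θ sin φ H_t^{α+1,β+1}(θ,φ)`. -/
def Htilde (α β t θ φ : ℝ) : ℝ :=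
  (1 / 4) * Real.sin θ * Real.sin φ * Hker (α + 1) (β + 1) t θ φ

end

/-!
Write `q(θ, φ, u, v) = q(θ, φ, 1, 1) + (1 - u) a + (1 - v) b`, where `a = sin (θ / 2) sin (φ / 2)`
and `b = cos (θ / 2) cos (φ / 2)`. Near `u = 1` the measure `Π_α` behaves like
`(1 - u) ^ (α - 1 / 2) du`, so integrating a negative power of `D + (1 - u) a` against it trades
`α + 1 / 2` powers of `D` for as many powers of `D + a`. Doing this in both variables bounds the
integral of `q ^ (-(α + β + 1 + γ))` by a multiple of
`q(θ, φ, 0, 1) ^ (-(α + 1 / 2)) * q(θ, φ, 1, 0) ^ (-(β + 1 / 2)) * q(θ, φ, 1, 1) ^ (-γ)`.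
With `r = |θ - φ|`, these three values of `q` are at least constant multiples of
`(sin (θ / 2) + r) ^ 2`, `(cos (θ / 2) + r) ^ 2` and `r ^ 2`, whereas the measure of the ball is at
most `2 r (sin (θ / 2) + r) ^ (2 α + 1) (cos (θ / 2) + r) ^ (2 β + 1)`.
-/

section PowerIntegrals

lemma setLIntegral_Ioc_zero_rpow {s c : ℝ} (hs : -1 < s) (hc : 0 ≤ c) :
    ∫⁻ w in Ioc 0 c, ENNReal.ofReal (w ^ s) = ENNReal.ofReal (c ^ (s + 1) / (s + 1)) := by
  have integrable : IntegrableOn (fun w : ℝ => w ^ s) (Ioc 0 c) :=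
    (intervalIntegrable_iff_integrableOn_Ioc_of_le hc).1
      (intervalIntegral.intervalIntegrable_rpow' hs)
  rw [← ofReal_integral_eq_lintegral_ofReal integrable]
  · rw [← intervalIntegral.integral_of_le hc, integral_rpow (Or.inl hs),
      Real.zero_rpow (by linarith), sub_zero]
  · filter_upwards [ae_restrict_mem measurableSet_Ioc] with w hw
    exact Real.rpow_nonneg hw.1.le _

lemma setLIntegral_Ioi_rpow {s c : ℝ} (hs : s < -1) (hc : 0 < c) :
    ∫⁻ w in Ioi c, ENNReal.ofReal (w ^ s) = ENNReal.ofReal (-c ^ (s + 1) / (s + 1)) := by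
  rw [← ofReal_integral_eq_lintegral_ofReal (integrableOn_Ioi_rpow_of_lt hs hc),
    integral_Ioi_rpow_of_lt hs hc]
  filter_upwards [ae_restrict_mem measurableSet_Ioi] with w hw
  exact Real.rpow_nonneg (hc.trans hw).le _

lemma setLIntegral_Icc_neg_le_two_mul {c : ℝ} {f : ℝ → ENNReal}
    (hf : ∀ x ∈ Ico 0 c, f (-x) ≤ f x) :
    ∫⁻ x in Icc (-c) c, f x ≤ 2 * ∫⁻ x in Ico 0 c, f x := by
  have reflect : ∫⁻ x in Ioc (-c) 0, f x = ∫⁻ x in Ico 0 c, f (-x) := by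
    rw [← (Measure.measurePreserving_neg (volume : Measure ℝ)).setLIntegral_comp_preimage_emb
      measurableEmbedding_neg f, Set.neg_preimage, Set.neg_Ioc, neg_zero, neg_neg]
  have cover : Ioo (-c) c ⊆ Ioc (-c) 0 ∪ Ico 0 c := fun x hx =>
    (le_total x 0).imp (fun h => ⟨hx.1, h⟩) fun h => ⟨h, hx.2⟩
  calc ∫⁻ x in Icc (-c) c, f x = ∫⁻ x in Ioo (-c) c, f x := setLIntegral_congr Ioo_ae_eq_Icc.symm
    _ ≤ ∫⁻ x in Ioc (-c) 0 ∪ Ico 0 c, f x := lintegral_mono_set cover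
    _ ≤ (∫⁻ x in Ioc (-c) 0, f x) + ∫⁻ x in Ico 0 c, f x := lintegral_union_le _ _ _
    _ ≤ (∫⁻ x in Ico 0 c, f x) + ∫⁻ x in Ico 0 c, f x := by
      rw [reflect]
      gcongr ?_ + _
      exact setLIntegral_mono' measurableSet_Ico hf
    _ = 2 * ∫⁻ x in Ico 0 c, f x := (two_mul _).symm

lemma setLIntegral_Ico_zero_comp_sub_left (f : ℝ → ENNReal) (c : ℝ) :
    ∫⁻ x in Ico 0 c, f (c - x) = ∫⁻ w in Ioc 0 c, f w := by
  rw [← (Measure.measurePreserving_sub_left volume c).setLIntegral_comp_preimage_emb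
    (measurableEmbedding_subLeft c) f, Set.preimage_const_sub_Ioc, sub_self, sub_zero]

end PowerIntegrals

section WeightedIntegrals

variable {A D a γ : ℝ}

lemma setLIntegral_Ioc_zero_rpow_mul_add_mul_rpow_le {c p : ℝ} (hA : 0 < A) (hp : 0 ≤ p)
    (hD : 0 < D) (ha : 0 ≤ a) (hc : 0 ≤ c) :
    ∫⁻ w in Ioc 0 c, ENNReal.ofReal (w ^ (A - 1) * (D + w * a) ^ (-p))
      ≤ ENNReal.ofReal (D ^ (-p) * (c ^ A / A)) := by
  calc _ ≤ ∫⁻ w in Ioc 0 c, ENNReal.ofReal (D ^ (-p)) * ENNReal.ofReal (w ^ (A - 1)) := by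
        refine setLIntegral_mono' measurableSet_Ioc fun w hw => ?_
        have hw0 : 0 < w := hw.1
        rw [← ENNReal.ofReal_mul (by positivity), mul_comm]
        refine ENNReal.ofReal_le_ofReal (mul_le_mul_of_nonneg_right ?_ (by positivity))
        exact Real.rpow_le_rpow_of_nonpos hD (le_add_of_nonneg_right (by positivity)) (by linarith)
    _ = _ := by
        rw [lintegral_const_mul' _ _ ENNReal.ofReal_ne_top,
          setLIntegral_Ioc_zero_rpow (by linarith) hc, ← ENNReal.ofReal_mul (by positivity),
          sub_add_cancel]

lemma setLIntegral_Ioc_one_rpow_mul_add_mul_rpow_le {c : ℝ} (hA : 0 ≤ A) (hγ : 0 < γ) (hD : 0 < D)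
    (ha : 0 ≤ a) (hc : 0 < c) :
    ∫⁻ w in Ioc c 1, ENNReal.ofReal (w ^ (A - 1) * (D + w * a) ^ (-(A + γ)))
      ≤ ENNReal.ofReal ((D + a) ^ (-(A + γ)) * (c ^ (-γ) / γ)) := by
  have integrand_le {w : ℝ} (hw0 : 0 < w) (hw1 : w ≤ 1) :
      w ^ (A - 1) * (D + w * a) ^ (-(A + γ)) ≤ (D + a) ^ (-(A + γ)) * w ^ (-γ - 1) := by
    calc w ^ (A - 1) * (D + w * a) ^ (-(A + γ))
        ≤ w ^ (A - 1) * (w * (D + a)) ^ (-(A + γ)) := by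
          refine mul_le_mul_of_nonneg_left ?_ (by positivity)
          exact Real.rpow_le_rpow_of_nonpos (by positivity) (by nlinarith) (by linarith)
      _ = (D + a) ^ (-(A + γ)) * (w ^ (A - 1) * w ^ (-(A + γ))) := by
          rw [Real.mul_rpow hw0.le (by positivity)]; ring
      _ = (D + a) ^ (-(A + γ)) * w ^ (-γ - 1) := by rw [← Real.rpow_add hw0]; ring_nf
  calc _ ≤ ∫⁻ w in Ioc c 1,
          ENNReal.ofReal ((D + a) ^ (-(A + γ))) * ENNReal.ofReal (w ^ (-γ - 1)) := by
        refine setLIntegral_mono' measurableSet_Ioc fun w hw => ?_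
        rw [← ENNReal.ofReal_mul (by positivity)]
        exact ENNReal.ofReal_le_ofReal (integrand_le (hc.trans hw.1) hw.2)
    _ ≤ ∫⁻ w in Ioi c, ENNReal.ofReal ((D + a) ^ (-(A + γ))) * ENNReal.ofReal (w ^ (-γ - 1)) :=
        lintegral_mono_set Ioc_subset_Ioi_self
    _ = _ := by
        rw [lintegral_const_mul' _ _ ENNReal.ofReal_ne_top,
          setLIntegral_Ioi_rpow (by linarith) hc, ← ENNReal.ofReal_mul (by positivity),
          sub_add_cancel, neg_div_neg_eq]

lemma setLIntegral_Ioc_zero_one_rpow_mul_add_mul_rpow_le (hA : 0 < A) (hγ : 0 < γ) (hD : 0 < D)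
    (ha : 0 ≤ a) :
    ∫⁻ w in Ioc 0 1, ENNReal.ofReal (w ^ (A - 1) * (D + w * a) ^ (-(A + γ)))
      ≤ ENNReal.ofReal ((1 / A + 1 / γ) * ((D + a) ^ (-A) * D ^ (-γ))) := by
  have hS : 0 < D + a := by positivity
  -- Below `D / (D + a)` the base `D + w * a` is comparable to `D`, above it to `w * (D + a)`.
  set c := D / (D + a) with hc
  have hc0 : 0 < c := by positivity
  have near : D ^ (-(A + γ)) * (c ^ A / A) = 1 / A * ((D + a) ^ (-A) * D ^ (-γ)) := by
    rw [hc, Real.div_rpow hD.le hS.le, Real.rpow_neg hS.le, neg_add_rev, Real.rpow_add hD,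
      Real.rpow_neg hD.le A]
    field_simp
  have far : (D + a) ^ (-(A + γ)) * (c ^ (-γ) / γ) = 1 / γ * ((D + a) ^ (-A) * D ^ (-γ)) := by
    rw [hc, Real.div_rpow hD.le hS.le, neg_add, Real.rpow_add hS]
    field_simp
  calc _ ≤ _ := lintegral_mono_set Ioc_subset_Ioc_union_Ioc
    _ ≤ _ := lintegral_union_le _ (Ioc 0 c) (Ioc c 1)
    _ ≤ _ := add_le_add
        (setLIntegral_Ioc_zero_rpow_mul_add_mul_rpow_le hA (by positivity) hD ha hc0.le)
        (setLIntegral_Ioc_one_rpow_mul_add_mul_rpow_le hA.le hγ hD ha hc0)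
    _ = _ := by
        rw [← ENNReal.ofReal_add (by positivity) (by positivity), near, far, add_mul]

lemma one_sub_sq_rpow_le {u : ℝ} (hA : 0 ≤ A) (hu : u ∈ Ico (0 : ℝ) 1) :
    (1 - u ^ 2) ^ (A - 1) ≤ 2 ^ A * (1 - u) ^ (A - 1) := by
  have h1 : 1 ≤ 1 + u := by linarith [hu.1]
  have h2 : 0 < 1 - u := by linarith [hu.2]
  rw [show 1 - u ^ 2 = (1 + u) * (1 - u) by ring, Real.mul_rpow (by linarith) h2.le]
  gcongr
  calc (1 + u) ^ (A - 1) ≤ (1 + u) ^ A := Real.rpow_le_rpow_of_exponent_le h1 (by linarith)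
    _ ≤ 2 ^ A := Real.rpow_le_rpow (by linarith) (by linarith [hu.2]) hA

lemma setLIntegral_Icc_one_sub_sq_rpow_mul_add_mul_rpow_le (hA : 0 < A) (hγ : 0 < γ) (hD : 0 < D)
    (ha : 0 ≤ a) :
    ∫⁻ u in Icc (-1) 1, ENNReal.ofReal ((1 - u ^ 2) ^ (A - 1) * (D + (1 - u) * a) ^ (-(A + γ)))
      ≤ ENNReal.ofReal (2 * 2 ^ A * (1 / A + 1 / γ) * ((D + a) ^ (-A) * D ^ (-γ))) := by
  calc _ ≤ 2 * ∫⁻ u in Ico 0 1,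
            ENNReal.ofReal ((1 - u ^ 2) ^ (A - 1) * (D + (1 - u) * a) ^ (-(A + γ))) := by
        refine setLIntegral_Icc_neg_le_two_mul fun u hu => ENNReal.ofReal_le_ofReal ?_
        have hu1 : 0 < 1 - u := by linarith [hu.2]
        rw [neg_sq]
        refine mul_le_mul_of_nonneg_left ?_ (Real.rpow_nonneg (by nlinarith [hu.1]) _)
        refine Real.rpow_le_rpow_of_nonpos (by positivity) ?_ (by linarith)
        gcongr
        linarith [hu.1]
    _ ≤ 2 * ∫⁻ u in Ico (0 : ℝ) 1, ENNReal.ofReal (2 ^ A) *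
            ENNReal.ofReal ((1 - u) ^ (A - 1) * (D + (1 - u) * a) ^ (-(A + γ))) := by
        refine mul_le_mul_right (setLIntegral_mono' measurableSet_Ico fun u hu => ?_) 2
        have hu1 : 0 < 1 - u := by linarith [hu.2]
        rw [← ENNReal.ofReal_mul (by positivity), ← mul_assoc]
        exact ENNReal.ofReal_le_ofReal
          (mul_le_mul_of_nonneg_right (one_sub_sq_rpow_le hA.le hu) (by positivity))
    _ = 2 * (ENNReal.ofReal (2 ^ A) * ∫⁻ w in Ioc (0 : ℝ) 1,
            ENNReal.ofReal (w ^ (A - 1) * (D + w * a) ^ (-(A + γ)))) := by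
        rw [lintegral_const_mul' _ _ ENNReal.ofReal_ne_top, setLIntegral_Ico_zero_comp_sub_left
          (fun w => ENNReal.ofReal (w ^ (A - 1) * (D + w * a) ^ (-(A + γ))))]
    _ ≤ 2 * (ENNReal.ofReal (2 ^ A) *
            ENNReal.ofReal ((1 / A + 1 / γ) * ((D + a) ^ (-A) * D ^ (-γ)))) := by
        gcongr
        exact setLIntegral_Ioc_zero_one_rpow_mul_add_mul_rpow_le hA hγ hD ha
    _ = _ := by
        rw [← ENNReal.ofReal_ofNat 2, ← ENNReal.ofReal_mul (by positivity),
          ← ENNReal.ofReal_mul (by positivity), mul_assoc, mul_assoc]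

end WeightedIntegrals

section PiMeasure

lemma ae_piMeasure_mem_Icc (α : ℝ) : ∀ᵐ u ∂(PiMeasure α), u ∈ Icc (-1 : ℝ) 1 := by
  unfold PiMeasure
  split_ifs
  · refine Measure.ae_smul_measure (ae_add_measure_iff.2 ⟨?_, ?_⟩) _ <;>
      exact (ae_dirac_iff measurableSet_Icc).2 (by norm_num)
  · exact (withDensity_absolutelyContinuous _ _).ae_le (ae_restrict_mem measurableSet_Icc)

lemma lintegral_piMeasure_neg_half (f : ℝ → ENNReal) :
    ∫⁻ u, f u ∂(PiMeasure (-(1 / 2))) = 2⁻¹ * (f (-1) + f 1) := by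
  rw [PiMeasure, if_pos rfl, lintegral_smul_measure, lintegral_add_measure, lintegral_dirac,
    lintegral_dirac, smul_eq_mul]

lemma lintegral_piMeasure_neg_half_add_mul_rpow_le {γ D a : ℝ} (hγ : 0 ≤ γ) (hD : 0 < D)
    (ha : 0 ≤ a) :
    ∫⁻ u, ENNReal.ofReal ((D + (1 - u) * a) ^ (-γ)) ∂(PiMeasure (-(1 / 2)))
      ≤ ENNReal.ofReal (D ^ (-γ)) := by
  have integrand_le {u : ℝ} (hu : u ≤ 1) :
      ENNReal.ofReal ((D + (1 - u) * a) ^ (-γ)) ≤ ENNReal.ofReal (D ^ (-γ)) := by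
    refine ENNReal.ofReal_le_ofReal (Real.rpow_le_rpow_of_nonpos hD ?_ (by linarith))
    exact le_add_of_nonneg_right (mul_nonneg (by linarith) ha)
  calc _ ≤ 2⁻¹ * (ENNReal.ofReal (D ^ (-γ)) + ENNReal.ofReal (D ^ (-γ))) := by
        rw [lintegral_piMeasure_neg_half]
        gcongr 2⁻¹ * ?_
        exact add_le_add (integrand_le (by norm_num)) (integrand_le le_rfl)
    _ = ENNReal.ofReal (D ^ (-γ)) := by
        rw [← two_mul, ← mul_assoc, ENNReal.inv_mul_cancel two_ne_zero ENNReal.ofNat_ne_top,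
          one_mul]

lemma exists_lintegral_piMeasure_add_mul_rpow_le_of_neg_half_lt {α γ : ℝ} (hα : -(1 / 2) < α)
    (hγ : 0 < γ) :
    ∃ C : ℝ, 0 < C ∧ ∀ D a : ℝ, 0 < D → 0 ≤ a →
      ∫⁻ u, ENNReal.ofReal ((D + (1 - u) * a) ^ (-(α + 1 / 2 + γ))) ∂(PiMeasure α)
        ≤ ENNReal.ofReal (C * ((D + a) ^ (-(α + 1 / 2)) * D ^ (-γ))) := by
  have hA : 0 < α + 1 / 2 := by linarith
  set k := Real.Gamma (α + 1) / (√π * Real.Gamma (α + 1 / 2)) with hk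
  have hk0 : 0 < k := by
    have := Real.Gamma_pos_of_pos hA
    have := Real.Gamma_pos_of_pos (show 0 < α + 1 by linarith)
    positivity
  refine ⟨k * (2 * 2 ^ (α + 1 / 2) * (1 / (α + 1 / 2) + 1 / γ)), by positivity,
    fun D a hD ha => ?_⟩
  rw [PiMeasure, if_neg hα.ne', ← hk]
  calc _ ≤ _ := lintegral_withDensity_le_lintegral_mul _ (by fun_prop) _
    _ = ∫⁻ u in Icc (-1) 1, ENNReal.ofReal k * ENNReal.ofReal
          ((1 - u ^ 2) ^ (α + 1 / 2 - 1) * (D + (1 - u) * a) ^ (-(α + 1 / 2 + γ))) := by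
        refine setLIntegral_congr_fun measurableSet_Icc fun u hu => ?_
        have : 0 ≤ (1 - u ^ 2) ^ (α - 1 / 2) := Real.rpow_nonneg (by nlinarith [hu.1, hu.2]) _
        rw [Pi.mul_apply, ← ENNReal.ofReal_mul (by positivity),
          ← ENNReal.ofReal_mul (by positivity), mul_assoc,
          show α + 1 / 2 - 1 = α - 1 / 2 by ring]
    _ ≤ _ := by
        rw [lintegral_const_mul' _ _ ENNReal.ofReal_ne_top, mul_assoc, ENNReal.ofReal_mul hk0.le]
        gcongr
        exact setLIntegral_Icc_one_sub_sq_rpow_mul_add_mul_rpow_le hA hγ hD ha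

lemma exists_lintegral_piMeasure_add_mul_rpow_le {α γ : ℝ} (hα : -(1 / 2) ≤ α) (hγ : 0 < γ) :
    ∃ C : ℝ, 0 < C ∧ ∀ D a : ℝ, 0 < D → 0 ≤ a →
      ∫⁻ u, ENNReal.ofReal ((D + (1 - u) * a) ^ (-(α + 1 / 2 + γ))) ∂(PiMeasure α)
        ≤ ENNReal.ofReal (C * ((D + a) ^ (-(α + 1 / 2)) * D ^ (-γ))) := by
  rcases hα.eq_or_lt with rfl | hα
  · refine ⟨1, one_pos, fun D a hD ha => ?_⟩
    simpa only [neg_add_cancel, zero_add, neg_zero, Real.rpow_zero, one_mul]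
      using lintegral_piMeasure_neg_half_add_mul_rpow_le hγ.le hD ha
  · exact exists_lintegral_piMeasure_add_mul_rpow_le_of_neg_half_lt hα hγ

lemma exists_lintegral_lintegral_piMeasure_add_mul_rpow_le {α β γ : ℝ} (hα : -(1 / 2) ≤ α)
    (hβ : -(1 / 2) ≤ β) (hγ : 0 < γ) :
    ∃ C : ℝ, 0 < C ∧ ∀ D a b : ℝ, 0 < D → 0 ≤ a → 0 ≤ b →
      ∫⁻ u, ∫⁻ v, ENNReal.ofReal ((D + (1 - u) * a + (1 - v) * b) ^ (-(α + β + 1 + γ)))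
          ∂(PiMeasure β) ∂(PiMeasure α)
        ≤ ENNReal.ofReal
          (C * ((D + a) ^ (-(α + 1 / 2)) * (D + b) ^ (-(β + 1 / 2)) * D ^ (-γ))) := by
  obtain ⟨C₁, hC₁, integral_v_le⟩ :=
    exists_lintegral_piMeasure_add_mul_rpow_le hβ (show 0 < α + 1 / 2 + γ by linarith)
  obtain ⟨C₂, hC₂, integral_u_le⟩ := exists_lintegral_piMeasure_add_mul_rpow_le hα hγ
  refine ⟨C₁ * C₂, by positivity, fun D a b hD ha hb => ?_⟩
  have inner_le {u : ℝ} (hu : u ≤ 1) :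
      ∫⁻ v, ENNReal.ofReal ((D + (1 - u) * a + (1 - v) * b) ^ (-(α + β + 1 + γ))) ∂(PiMeasure β)
        ≤ ENNReal.ofReal (C₁ * (D + b) ^ (-(β + 1 / 2))) *
          ENNReal.ofReal ((D + (1 - u) * a) ^ (-(α + 1 / 2 + γ))) := by
    have hua : 0 ≤ (1 - u) * a := mul_nonneg (by linarith) ha
    rw [show α + β + 1 + γ = β + 1 / 2 + (α + 1 / 2 + γ) by ring,
      ← ENNReal.ofReal_mul (by positivity), mul_assoc]
    refine (integral_v_le _ b (by positivity) hb).trans (ENNReal.ofReal_le_ofReal ?_)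
    have : (D + (1 - u) * a + b) ^ (-(β + 1 / 2)) ≤ (D + b) ^ (-(β + 1 / 2)) :=
      Real.rpow_le_rpow_of_nonpos (by positivity) (by linarith) (by linarith)
    gcongr
  calc _ ≤ ∫⁻ u, ENNReal.ofReal (C₁ * (D + b) ^ (-(β + 1 / 2))) *
            ENNReal.ofReal ((D + (1 - u) * a) ^ (-(α + 1 / 2 + γ))) ∂(PiMeasure α) := by
        refine lintegral_mono_ae ?_
        filter_upwards [ae_piMeasure_mem_Icc α] with u hu using inner_le hu.2
    _ ≤ ENNReal.ofReal (C₁ * (D + b) ^ (-(β + 1 / 2))) *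
          ENNReal.ofReal (C₂ * ((D + a) ^ (-(α + 1 / 2)) * D ^ (-γ))) := by
        rw [lintegral_const_mul' _ _ ENNReal.ofReal_ne_top]
        gcongr
        exact integral_u_le D a hD ha
    _ = _ := by
        rw [← ENNReal.ofReal_mul (by positivity)]
        congr 1
        ring

end PiMeasure

section HalfAngle

variable {θ φ : ℝ}

lemma sin_half_nonneg_of_mem_Icc (hθ : θ ∈ Icc 0 π) : 0 ≤ Real.sin (θ / 2) :=
  Real.sin_nonneg_of_nonneg_of_le_pi (by linarith [hθ.1]) (by linarith [hθ.1, hθ.2])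

lemma cos_half_nonneg_of_mem_Icc (hθ : θ ∈ Icc 0 π) : 0 ≤ Real.cos (θ / 2) :=
  Real.cos_nonneg_of_neg_pi_div_two_le_of_le (by linarith [hθ.1, Real.pi_pos]) (by linarith [hθ.2])

lemma abs_sin_half_sub_sin_half_le (θ φ : ℝ) :
    |Real.sin (θ / 2) - Real.sin (φ / 2)| ≤ |θ - φ| / 2 := by
  simpa only [← sub_div, abs_div, abs_two] using Real.abs_sin_sub_sin_le (θ / 2) (φ / 2)

lemma abs_cos_half_sub_cos_half_le (θ φ : ℝ) :
    |Real.cos (θ / 2) - Real.cos (φ / 2)| ≤ |θ - φ| / 2 := by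
  simpa only [← sub_div, abs_div, abs_two] using Real.abs_cos_sub_cos_le (θ / 2) (φ / 2)

lemma qfun_eq_qfun_one_one_add (θ φ u v : ℝ) :
    qfun θ φ u v = qfun θ φ 1 1 + (1 - u) * (Real.sin (θ / 2) * Real.sin (φ / 2))
      + (1 - v) * (Real.cos (θ / 2) * Real.cos (φ / 2)) := by
  unfold qfun
  ring

lemma qfun_one_one (θ φ : ℝ) : qfun θ φ 1 1 = 1 - Real.cos ((θ - φ) / 2) := by
  rw [qfun, sub_div, Real.cos_sub]
  ring

lemma qfun_zero_one (θ φ : ℝ) :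
    qfun θ φ 0 1 = qfun θ φ 1 1 + Real.sin (θ / 2) * Real.sin (φ / 2) := by
  rw [qfun_eq_qfun_one_one_add]
  ring

lemma qfun_one_zero (θ φ : ℝ) :
    qfun θ φ 1 0 = qfun θ φ 1 1 + Real.cos (θ / 2) * Real.cos (φ / 2) := by
  rw [qfun_eq_qfun_one_one_add]
  ring

lemma qfun_one_one_le_qfun_zero_one (hθ : θ ∈ Icc 0 π) (hφ : φ ∈ Icc 0 π) :
    qfun θ φ 1 1 ≤ qfun θ φ 0 1 := by
  rw [qfun_zero_one]
  exact le_add_of_nonneg_right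
    (mul_nonneg (sin_half_nonneg_of_mem_Icc hθ) (sin_half_nonneg_of_mem_Icc hφ))

lemma qfun_one_one_le_qfun_one_zero (hθ : θ ∈ Icc 0 π) (hφ : φ ∈ Icc 0 π) :
    qfun θ φ 1 1 ≤ qfun θ φ 1 0 := by
  rw [qfun_one_zero]
  exact le_add_of_nonneg_right
    (mul_nonneg (cos_half_nonneg_of_mem_Icc hθ) (cos_half_nonneg_of_mem_Icc hφ))

lemma sq_abs_sub_le_qfun_one_one (h : |θ - φ| ≤ 2 * π) :
    |θ - φ| ^ 2 ≤ 2 * π ^ 2 * qfun θ φ 1 1 := by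
  have cos_le : Real.cos ((θ - φ) / 2) ≤ 1 - 2 / π ^ 2 * ((θ - φ) / 2) ^ 2 :=
    Real.cos_le_one_sub_mul_cos_sq (by rw [abs_div, abs_two]; linarith)
  calc |θ - φ| ^ 2 = 2 * π ^ 2 * (2 / π ^ 2 * ((θ - φ) / 2) ^ 2) := by
        rw [sq_abs]
        field_simp
    _ ≤ 2 * π ^ 2 * qfun θ φ 1 1 := by
        rw [qfun_one_one]
        gcongr
        linarith

lemma qfun_one_one_pos (h : |θ - φ| ≤ 2 * π) (hne : θ ≠ φ) : 0 < qfun θ φ 1 1 := by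
  have : 0 < |θ - φ| := abs_pos.2 (sub_ne_zero.2 hne)
  exact pos_of_mul_pos_right ((pow_pos this 2).trans_le (sq_abs_sub_le_qfun_one_one h))
    (by positivity)

lemma add_abs_sub_sq_le {x y : ℝ} (hx : 0 ≤ x) (hy : 0 ≤ y) (hxy : |x - y| ≤ |θ - φ| / 2)
    (h : |θ - φ| ≤ 2 * π) :
    (x + |θ - φ|) ^ 2 ≤ 5 * π ^ 2 * (qfun θ φ 1 1 + x * y) := by
  set r := |θ - φ|
  have sq_le : x * (x - r / 2) ≤ x * y := by
    gcongr
    linarith [(abs_le.1 hxy).2]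
  calc (x + r) ^ 2 ≤ 4 * (x * y) + 5 / 2 * r ^ 2 := by nlinarith [sq_nonneg (x - r / 2)]
    _ ≤ 5 * π ^ 2 * (x * y) + 5 / 2 * (2 * π ^ 2 * qfun θ φ 1 1) := by
        gcongr
        · nlinarith [Real.pi_gt_three]
        · exact sq_abs_sub_le_qfun_one_one h
    _ = 5 * π ^ 2 * (qfun θ φ 1 1 + x * y) := by ring

lemma abs_sub_le_two_pi_of_mem_Icc (hθ : θ ∈ Icc 0 π) (hφ : φ ∈ Icc 0 π) : |θ - φ| ≤ 2 * π := by
  linarith [Real.dist_le_of_mem_Icc hθ hφ, Real.dist_eq θ φ, Real.pi_pos]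

lemma sin_half_add_abs_sub_sq_le (hθ : θ ∈ Icc 0 π) (hφ : φ ∈ Icc 0 π) :
    (Real.sin (θ / 2) + |θ - φ|) ^ 2 ≤ 5 * π ^ 2 * qfun θ φ 0 1 := by
  rw [qfun_zero_one]
  exact add_abs_sub_sq_le (sin_half_nonneg_of_mem_Icc hθ) (sin_half_nonneg_of_mem_Icc hφ)
    (abs_sin_half_sub_sin_half_le θ φ) (abs_sub_le_two_pi_of_mem_Icc hθ hφ)

lemma cos_half_add_abs_sub_sq_le (hθ : θ ∈ Icc 0 π) (hφ : φ ∈ Icc 0 π) :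
    (Real.cos (θ / 2) + |θ - φ|) ^ 2 ≤ 5 * π ^ 2 * qfun θ φ 1 0 := by
  rw [qfun_one_zero]
  exact add_abs_sub_sq_le (cos_half_nonneg_of_mem_Icc hθ) (cos_half_nonneg_of_mem_Icc hφ)
    (abs_cos_half_sub_cos_half_le θ φ) (abs_sub_le_two_pi_of_mem_Icc hθ hφ)

end HalfAngle

lemma rpow_two_mul_mul_rpow_neg_le {z R L E : ℝ} (hE : 0 ≤ E) (hz : 0 ≤ z) (hL : 0 ≤ L)
    (hR : 0 < R) (h : z ^ 2 ≤ L * R) : z ^ (2 * E) * R ^ (-E) ≤ L ^ E := by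
  rw [Real.rpow_neg hR.le, ← div_eq_mul_inv, div_le_iff₀ (by positivity),
    ← Real.mul_rpow hL hR.le, Real.rpow_mul hz, Real.rpow_two]
  exact Real.rpow_le_rpow (by positivity) h hE

section BallMeasure

variable {α β θ : ℝ}

lemma jacobiMeasure_jacobiBall_le {r : ℝ} (hα : -(1 / 2) ≤ α) (hβ : -(1 / 2) ≤ β)
    (hθ : θ ∈ Icc 0 π) (hr : 0 ≤ r) :
    jacobiMeasure α β (jacobiBall θ r) ≤ ENNReal.ofReal (2 * r *
      ((Real.sin (θ / 2) + r) ^ (2 * α + 1) * (Real.cos (θ / 2) + r) ^ (2 * β + 1))) := by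
  have measurable_ball : MeasurableSet (jacobiBall θ r) :=
    measurableSet_Ioo.inter measurableSet_Ioo
  have hsin := sin_half_nonneg_of_mem_Icc hθ
  have hcos := cos_half_nonneg_of_mem_Icc hθ
  set M := (Real.sin (θ / 2) + r) ^ (2 * α + 1) * (Real.cos (θ / 2) + r) ^ (2 * β + 1)
  have density_le {x : ℝ} (hx : x ∈ jacobiBall θ r) :
      Real.sin (x / 2) ^ (2 * α + 1) * Real.cos (x / 2) ^ (2 * β + 1) ≤ M := by
    have hxIcc : x ∈ Icc 0 π := Ioo_subset_Icc_self hx.2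
    have hxθ : |x - θ| ≤ r := abs_le.2 ⟨by linarith [hx.1.1], by linarith [hx.1.2]⟩
    have sin_le := (abs_le.1 (abs_sin_half_sub_sin_half_le x θ)).2
    have cos_le := (abs_le.1 (abs_cos_half_sub_cos_half_le x θ)).2
    refine mul_le_mul ?_ ?_ (Real.rpow_nonneg (cos_half_nonneg_of_mem_Icc hxIcc) _)
      (by positivity)
    · exact Real.rpow_le_rpow (sin_half_nonneg_of_mem_Icc hxIcc) (by linarith) (by linarith)
    · exact Real.rpow_le_rpow (cos_half_nonneg_of_mem_Icc hxIcc) (by linarith) (by linarith)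
  calc jacobiMeasure α β (jacobiBall θ r)
      ≤ ∫⁻ _ in jacobiBall θ r, ENNReal.ofReal M := by
        rw [jacobiMeasure, withDensity_apply _ measurable_ball,
          Measure.restrict_restrict measurable_ball, jacobiBall, inter_assoc, inter_self]
        exact setLIntegral_mono' measurable_ball fun x hx =>
          ENNReal.ofReal_le_ofReal (density_le hx)
    _ = ENNReal.ofReal M * volume (jacobiBall θ r) := setLIntegral_const _ _
    _ ≤ ENNReal.ofReal M * volume (Ioo (θ - r) (θ + r)) := by
        gcongr
        exact inter_subset_left
    _ = ENNReal.ofReal (2 * r * M) := by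
        rw [Real.volume_Ioo, ← ENNReal.ofReal_mul (by positivity)]
        congr 1
        ring

lemma jacobiMeasure_jacobiBall_mul_qfun_rpow_le {γ φ : ℝ} (hα : -(1 / 2) ≤ α) (hβ : -(1 / 2) ≤ β)
    (hγ : 0 ≤ γ) (hθ : θ ∈ Icc 0 π) (hφ : φ ∈ Icc 0 π) (hne : θ ≠ φ) :
    jacobiMeasure α β (jacobiBall θ |θ - φ|) * ENNReal.ofReal
        (qfun θ φ 0 1 ^ (-(α + 1 / 2)) * qfun θ φ 1 0 ^ (-(β + 1 / 2)) * qfun θ φ 1 1 ^ (-γ))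
      ≤ ENNReal.ofReal (2 * (5 * π ^ 2) ^ (α + 1 / 2 + (β + 1 / 2) + γ)
          * |θ - φ| ^ (1 - 2 * γ)) := by
  have hle := abs_sub_le_two_pi_of_mem_Icc hθ hφ
  have hsin := sin_half_nonneg_of_mem_Icc hθ
  have hcos := cos_half_nonneg_of_mem_Icc hθ
  have hq := qfun_one_one_pos hle hne
  have hqs := hq.trans_le (qfun_one_one_le_qfun_zero_one hθ hφ)
  have hqc := hq.trans_le (qfun_one_one_le_qfun_one_zero hθ hφ)
  have hr : 0 < |θ - φ| := abs_pos.2 (sub_ne_zero.2 hne)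
  set r := |θ - φ|
  set L := 5 * π ^ 2
  have hL : 0 < L := by positivity
  have sin_le : (Real.sin (θ / 2) + r) ^ (2 * (α + 1 / 2)) * qfun θ φ 0 1 ^ (-(α + 1 / 2))
      ≤ L ^ (α + 1 / 2) :=
    rpow_two_mul_mul_rpow_neg_le (by linarith) (by positivity) hL.le hqs
      (sin_half_add_abs_sub_sq_le hθ hφ)
  have cos_le : (Real.cos (θ / 2) + r) ^ (2 * (β + 1 / 2)) * qfun θ φ 1 0 ^ (-(β + 1 / 2))
      ≤ L ^ (β + 1 / 2) :=
    rpow_two_mul_mul_rpow_neg_le (by linarith) (by positivity) hL.le hqc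
      (cos_half_add_abs_sub_sq_le hθ hφ)
  have dist_le : r ^ (2 * γ) * qfun θ φ 1 1 ^ (-γ) ≤ L ^ γ :=
    rpow_two_mul_mul_rpow_neg_le hγ hr.le hL.le hq
      (by nlinarith [sq_abs_sub_le_qfun_one_one hle, sq_nonneg r])
  have r_eq : r = r ^ (1 - 2 * γ) * r ^ (2 * γ) := by
    rw [← Real.rpow_add hr, sub_add_cancel, Real.rpow_one]
  refine (mul_le_mul_left (jacobiMeasure_jacobiBall_le hα hβ hθ hr.le) _).trans ?_
  rw [← ENNReal.ofReal_mul (by positivity)]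
  refine ENNReal.ofReal_le_ofReal ?_
  calc _ = 2 * (((Real.sin (θ / 2) + r) ^ (2 * (α + 1 / 2)) * qfun θ φ 0 1 ^ (-(α + 1 / 2)))
          * ((Real.cos (θ / 2) + r) ^ (2 * (β + 1 / 2)) * qfun θ φ 1 0 ^ (-(β + 1 / 2)))
          * (r ^ (2 * γ) * qfun θ φ 1 1 ^ (-γ))) * r ^ (1 - 2 * γ) := by
        rw [show 2 * (α + 1 / 2) = 2 * α + 1 by ring, show 2 * (β + 1 / 2) = 2 * β + 1 by ring]
        nth_rw 1 [r_eq]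
        ring
    _ ≤ 2 * (L ^ (α + 1 / 2) * L ^ (β + 1 / 2) * L ^ γ) * r ^ (1 - 2 * γ) := by gcongr
    _ = _ := by rw [Real.rpow_add hL _ γ, Real.rpow_add hL (α + 1 / 2)]

end BallMeasure

lemma exists_lintegral_one_div_qfun_rpow_le {α β γ : ℝ} (hα : -(1 / 2) ≤ α) (hβ : -(1 / 2) ≤ β)
    (hγ : 0 < γ) :
    ∃ C : ℝ, 0 < C ∧ ∀ θ ∈ Icc (0 : ℝ) π, ∀ φ ∈ Icc (0 : ℝ) π, θ ≠ φ →
      ∫⁻ u, ∫⁻ v, ENNReal.ofReal (1 / qfun θ φ u v ^ (α + β + 1 + γ))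
          ∂(PiMeasure β) ∂(PiMeasure α)
        ≤ ENNReal.ofReal (C * (qfun θ φ 0 1 ^ (-(α + 1 / 2)) * qfun θ φ 1 0 ^ (-(β + 1 / 2))
          * qfun θ φ 1 1 ^ (-γ))) := by
  obtain ⟨C, hC, bound⟩ := exists_lintegral_lintegral_piMeasure_add_mul_rpow_le hα hβ hγ
  refine ⟨C, hC, fun θ hθ φ hφ hne => ?_⟩
  have hq := qfun_one_one_pos (abs_sub_le_two_pi_of_mem_Icc hθ hφ) hne
  have ha := mul_nonneg (sin_half_nonneg_of_mem_Icc hθ) (sin_half_nonneg_of_mem_Icc hφ)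
  have hb := mul_nonneg (cos_half_nonneg_of_mem_Icc hθ) (cos_half_nonneg_of_mem_Icc hφ)
  rw [qfun_zero_one, qfun_one_zero]
  refine le_of_eq_of_le ?_ (bound _ _ _ hq ha hb)
  refine lintegral_congr_ae ?_
  filter_upwards [ae_piMeasure_mem_Icc α] with u hu
  refine lintegral_congr_ae ?_
  filter_upwards [ae_piMeasure_mem_Icc β] with v hv
  have hua := mul_nonneg (sub_nonneg.2 hu.2) ha
  have hvb := mul_nonneg (sub_nonneg.2 hv.2) hb
  rw [qfun_eq_qfun_one_one_add θ φ u v, Real.rpow_neg (by positivity), one_div]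

theorem double_integral_q_bound_one_general {α β γ : ℝ} (hα : -(1 / 2) ≤ α) (hβ : -(1 / 2) ≤ β)
    (hγ : 0 < γ) :
    ∃ C : ℝ, 0 < C ∧
      ∀ θ ∈ Icc (0 : ℝ) π, ∀ φ ∈ Icc (0 : ℝ) π, θ ≠ φ →
        (∫⁻ u, ∫⁻ v, ENNReal.ofReal (1 / qfun θ φ u v ^ (α + β + 1 + γ))
            ∂(PiMeasure β) ∂(PiMeasure α))
          ≤ ENNReal.ofReal (C * |θ - φ| ^ (1 - 2 * γ))
            / jacobiMeasure α β (jacobiBall θ |θ - φ|) := by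
  obtain ⟨C, hC, integral_le⟩ := exists_lintegral_one_div_qfun_rpow_le hα hβ hγ
  refine ⟨C * (2 * (5 * π ^ 2) ^ (α + 1 / 2 + (β + 1 / 2) + γ)), by positivity,
    fun θ hθ φ hφ hne => ?_⟩
  have : 0 < |θ - φ| := abs_pos.2 (sub_ne_zero.2 hne)
  refine (ENNReal.le_div_iff_mul_le (Or.inr (ENNReal.ofReal_pos.2 (by positivity)).ne')
    (Or.inr ENNReal.ofReal_ne_top)).2 ?_
  refine (mul_le_mul_left (integral_le θ hθ φ hφ hne) _).trans ?_
  rw [mul_comm, ENNReal.ofReal_mul hC.le, mul_left_comm, mul_assoc C, ENNReal.ofReal_mul hC.le]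
  gcongr
  exact jacobiMeasure_jacobiBall_mul_qfun_rpow_le hα hβ hγ.le hθ hφ hne

/-- first estimate of Lemma 4.3 in [NoSjogren]. -/
theorem double_integral_q_bound_one (α β : ℝ) (hα : -(1 / 2) ≤ α) (hβ : -(1 / 2) ≤ β) :
    ∃ C : ℝ, 0 < C ∧
      ∀ θ ∈ Ioo (0 : ℝ) π, ∀ φ ∈ Ioo (0 : ℝ) π, θ ≠ φ →
        (∫⁻ u, ∫⁻ v, ENNReal.ofReal (1 / qfun θ φ u v ^ (α + β + 3 / 2))
            ∂(PiMeasure β) ∂(PiMeasure α))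
          ≤ ENNReal.ofReal C / jacobiMeasure α β (jacobiBall θ |θ - φ|) := by
  obtain ⟨C, hC, bound⟩ := double_integral_q_bound_one_general hα hβ (one_half_pos (α := ℝ))
  refine ⟨C, hC, fun θ hθ φ hφ hne => ?_⟩
  simpa only [show α + β + 1 + 1 / 2 = α + β + 3 / 2 by ring, sub_self, Real.rpow_zero, mul_one,
    mul_one_div_cancel (two_ne_zero (α := ℝ))]
    using bound θ (Ioo_subset_Icc_self hθ) φ (Ioo_subset_Icc_self hφ) hne
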